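/- (Claim 3: strong converse part of Theorem 3.) For every rate pair (R_𝒴, R_𝒵) ∈ [0,∞)², all positive constants λ₁^𝒴, λ₂^𝒴, λ₁^𝒵, λ₂^𝒵 with λ₁^𝒴 + λ₂^𝒴 + λ₁^𝒵 + λ₂^𝒵 < 1, and every ε > 0, there exists η₀ ∈ ℕ such that for every blocklength n ≥ η₀ and all finite sets ℳ_𝒴, ℳ_𝒵 with |ℳ_𝒴| = ⌈exp(exp(n R_𝒴))⌉ and |ℳ_𝒵| = ⌈exp(exp(n R_𝒵))⌉, a necessary condition for an (n, ℳ_𝒴, ℳ_𝒵, λ₁^𝒴, λ₂^𝒴, λ₁^𝒵, λ₂^𝒵) average-error ID code for the BC W(y,z|x) to exist is that for some PMF P on 𝒳 both R_𝒴 < I(P, W_𝒴) + ε and R_𝒵 < I(P, W_𝒵) + ε hold. -/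

import Mathlib

open scoped Classical
open Finset

noncomputable section

/-- `P` is a probability mass function on the finite type `X`. -/
def IsPMF {X : Type*} [Fintype X] (P : X → ℝ) : Prop :=
  (∀ x, 0 ≤ P x) ∧ ∑ x, P x = 1

/-- `W` is a (discrete memoryless) channel from `X` to `Y`. -/
def IsChannel {X Y : Type*} [Fintype Y] (W : X → Y → ℝ) : Prop :=
  (∀ x y, 0 ≤ W x y) ∧ ∀ x, ∑ y, W x y = 1

/-- The `n`-fold memoryless extension `W^n(𝐲|𝐱) = ∏ᵢ W(yᵢ|xᵢ)`. -/
def Wn {X Y : Type*} (W : X → Y → ℝ) (n : ℕ) (x : Fin n → X) (y : Fin n → Y) : ℝ :=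
  ∏ i, W (x i) (y i)

/-- Mutual information `I(P,W)` (natural logarithm), with the convention that
terms with `P x * W x y = 0` contribute `0`. -/
def mutInf {X Y : Type*} [Fintype X] [Fintype Y] (P : X → ℝ) (W : X → Y → ℝ) : ℝ :=
  ∑ x, ∑ y, if P x * W x y = 0 then 0
    else P x * W x y * Real.log (W x y / ∑ x', P x' * W x' y)

/-- The error requirements of an `(n, M, l1, l2)` ID code for the DMC `W`:
maximum probability of missed identification at most `l1`, maximum probability
of wrong identification at most `l2`. -/
def IDCodeErr {X Y M : Type*} [Fintype X] [Fintype Y]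
    (n : ℕ) (W : X → Y → ℝ) (Q : M → (Fin n → X) → ℝ)
    (D : M → Finset (Fin n → Y)) (l1 l2 : ℝ) : Prop :=
  (∀ m, ∑ x, Q m x * ∑ y ∈ (D m)ᶜ, Wn W n x y ≤ l1) ∧
  (∀ m m', m ≠ m' → ∑ x, Q m x * ∑ y ∈ D m', Wn W n x y ≤ l2)

/-- `(n, M, l1, l2)` ID code for the DMC `W`. -/
def IsIDCode {X Y M : Type*} [Fintype X] [Fintype Y]
    (n : ℕ) (W : X → Y → ℝ) (Q : M → (Fin n → X) → ℝ)
    (D : M → Finset (Fin n → Y)) (l1 l2 : ℝ) : Prop :=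
  (∀ m, IsPMF (Q m)) ∧ IDCodeErr n W Q D l1 l2

/-- `W` is a two-receiver broadcast channel from `X` to `Y × Z`. -/
def IsBC {X Y Z : Type*} [Fintype Y] [Fintype Z] (W : X → Y → Z → ℝ) : Prop :=
  (∀ x y z, 0 ≤ W x y z) ∧ ∀ x, ∑ y, ∑ z, W x y z = 1

/-- Marginal channel to terminal `Y`. -/
def margY {X Y Z : Type*} [Fintype Z] (W : X → Y → Z → ℝ) : X → Y → ℝ :=
  fun x y => ∑ z, W x y z

/-- Marginal channel to terminal `Z`. -/
def margZ {X Y Z : Type*} [Fintype Y] (W : X → Y → Z → ℝ) : X → Z → ℝ :=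
  fun x z => ∑ y, W x y z

/-- `(n, ℳ_Y, ℳ_Z, l1Y, l2Y, l1Z, l2Z)` average-error ID code for the BC `W`:
every `Q my mz` is a PMF on `Xⁿ`, and the mixtures (averaging uniformly over the
other receiver's message) form ID codes for the marginal channels. -/
def IsBCIDCode {X Y Z : Type*} [Fintype X] [Fintype Y] [Fintype Z]
    (n kY kZ : ℕ) (W : X → Y → Z → ℝ)
    (Q : Fin kY → Fin kZ → (Fin n → X) → ℝ)
    (DY : Fin kY → Finset (Fin n → Y)) (DZ : Fin kZ → Finset (Fin n → Z))
    (l1Y l2Y l1Z l2Z : ℝ) : Prop :=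
  (∀ my mz, IsPMF (Q my mz)) ∧
  IDCodeErr n (margY W) (fun my x => (kZ : ℝ)⁻¹ * ∑ mz, Q my mz x) DY l1Y l2Y ∧
  IDCodeErr n (margZ W) (fun mz x => (kY : ℝ)⁻¹ * ∑ my, Q my mz x) DZ l1Z l2Z

/-- A rate pair is achievable for the BC `W` under the average-error criterion. -/
def BCAchievable {X Y Z : Type*} [Fintype X] [Fintype Y] [Fintype Z]
    (W : X → Y → Z → ℝ) (Rp : ℝ × ℝ) : Prop :=
  0 ≤ Rp.1 ∧ 0 ≤ Rp.2 ∧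
  ∀ l1Y l2Y l1Z l2Z : ℝ, 0 < l1Y → 0 < l2Y → 0 < l1Z → 0 < l2Z →
    ∃ n₀ : ℕ, ∀ n : ℕ, n₀ ≤ n →
      ∃ (kY kZ : ℕ) (Q : Fin kY → Fin kZ → (Fin n → X) → ℝ)
        (DY : Fin kY → Finset (Fin n → Y)) (DZ : Fin kZ → Finset (Fin n → Z)),
        IsBCIDCode n kY kZ W Q DY DZ l1Y l2Y l1Z l2Z ∧
        ((0 < Rp.1 → Rp.1 ≤ (1 / n) * Real.log (Real.log kY)) ∧ (Rp.1 = 0 → kY = 1)) ∧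
        ((0 < Rp.2 → Rp.2 ≤ (1 / n) * Real.log (Real.log kZ)) ∧ (Rp.2 = 0 → kZ = 1))

/-!
Fix a receiver, a rate `R` and the set `G` of inputs whose type `P` satisfies `R < I(P, W) + ε`.
An input outside `G` rarely has transition probability above `exp (n (R - ε / 2))` times the
universal output measure, because the sum of the information densities concentrates around
`n I(P, W)`. By soft covering, the output of an input distribution is therefore determined, up to
the mass it puts on `G` and a small error, by a codebook of `N ≪ exp (n R)` input sequences. There
are only `|X| ^ (n N) ≪ exp (exp (n R))` codebooks, so almost every message shares its codebook with
another one. Since the outputs of these two messages must be distinguishable, almost every message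
puts mass at least about `1 - λ₁ - λ₂` on `G`.

For the broadcast channel this applies to both receivers and to the same average input
distribution. The two masses add up to more than one, so some input sequence is good for both
receivers, and its type is the required `P`.
-/

open scoped BigOperators
open Filter

section Moments

variable {ι : Type*} [Fintype ι]

lemma sum_mul_sub_mean {p : ι → ℝ} (hp : ∑ i, p i = 1) (f : ι → ℝ) :
    ∑ i, p i * (f i - ∑ j, p j * f j) = 0 := by
  simp only [mul_sub, sum_sub_distrib, ← sum_mul, hp, one_mul, sub_self]

lemma sum_mul_sub_mean_sq_le {p : ι → ℝ} (hp : ∑ i, p i = 1) (f : ι → ℝ) :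
    ∑ i, p i * (f i - ∑ j, p j * f j) ^ 2 ≤ ∑ i, p i * f i ^ 2 := by
  set μ := ∑ j, p j * f j with hμ
  calc ∑ i, p i * (f i - μ) ^ 2
      = ∑ i, (p i * f i ^ 2 - 2 * μ * (p i * f i) + μ ^ 2 * p i) :=
        sum_congr rfl fun i _ => by ring
    _ = ∑ i, p i * f i ^ 2 - μ ^ 2 := by
        rw [sum_add_distrib, sum_sub_distrib, ← mul_sum, ← mul_sum, hp, ← hμ]
        ring
    _ ≤ ∑ i, p i * f i ^ 2 := sub_le_self _ (sq_nonneg μ)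

variable [DecidableEq ι]

lemma sum_pi_prod_eq_one {κ : ι → Type*} [∀ i, Fintype (κ i)] {p : ∀ i, κ i → ℝ}
    (hp : ∀ i, ∑ a, p i a = 1) : ∑ y : ∀ i, κ i, ∏ i, p i (y i) = 1 := by
  rw [← Fintype.prod_sum, prod_eq_one fun i _ => hp i]

lemma sum_pi_prod_mul_mul {κ : ι → Type*} [∀ i, Fintype (κ i)] {p g : ∀ i, κ i → ℝ}
    (hp : ∀ i, ∑ a, p i a = 1) (hg : ∀ i, ∑ a, p i a * g i a = 0) (i j : ι) :
    ∑ y : ∀ i, κ i, (∏ k, p k (y k)) * (g i (y i) * g j (y j)) =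
      if i = j then ∑ a, p i a * g i a ^ 2 else 0 := by
  have hfactor (y : ∀ i, κ i) : (∏ k, p k (y k)) * (g i (y i) * g j (y j)) =
      ∏ k, p k (y k) * ((if k = i then g k (y k) else 1) * (if k = j then g k (y k) else 1)) := by
    simp only [prod_mul_distrib, prod_ite_eq', mem_univ, if_true]
  rw [sum_congr rfl fun y _ => hfactor y, ← Fintype.prod_sum fun k a =>
    p k a * ((if k = i then g k a else 1) * (if k = j then g k a else 1))]
  split_ifs with hij
  · subst hij
    rw [Fintype.prod_eq_single i fun _ hk => by simp [hk, hp]]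
    simp [sq]
  · exact prod_eq_zero (mem_univ i) (by simp [hij, hg])

lemma sum_pi_prod_mul_sum_sq {κ : ι → Type*} [∀ i, Fintype (κ i)] {p g : ∀ i, κ i → ℝ}
    (hp : ∀ i, ∑ a, p i a = 1) (hg : ∀ i, ∑ a, p i a * g i a = 0) :
    ∑ y : ∀ i, κ i, (∏ i, p i (y i)) * (∑ i, g i (y i)) ^ 2 = ∑ i, ∑ a, p i a * g i a ^ 2 := by
  simp_rw [sq (∑ _i, _), sum_mul_sum, mul_sum]
  rw [sum_comm]
  refine sum_congr rfl fun i _ => ?_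
  rw [sum_comm]
  simp_rw [sum_pi_prod_mul_mul hp hg i]
  simp

end Moments

namespace IsPMF

variable {ι α : Type*} [Fintype ι] [Fintype α] {P : α → ℝ}

lemma le_one (hP : IsPMF P) (x : α) : P x ≤ 1 :=
  (single_le_sum (fun a _ => hP.1 a) (mem_univ x)).trans hP.2.le

lemma sum_le_one (hP : IsPMF P) (s : Finset α) : ∑ x ∈ s, P x ≤ 1 :=
  (sum_le_univ_sum_of_nonneg hP.1).trans hP.2.le

protected lemma nonempty (hP : IsPMF P) : Nonempty α := by
  by_contra! h
  simpa using hP.2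

protected lemma expect [Nonempty ι] {Q : ι → α → ℝ} (hQ : ∀ i, IsPMF (Q i)) :
    IsPMF fun x => 𝔼 i, Q i x :=
  ⟨fun x => expect_nonneg fun i _ => (hQ i).1 x, by
    rw [← expect_sum_comm, expect_congr rfl fun i _ => (hQ i).2, Fintype.expect_const]⟩

lemma exists_le_sum_mul (hP : IsPMF P) (f : α → ℝ) : ∃ x, f x ≤ ∑ a, P a * f a := by
  have := hP.nonempty
  obtain ⟨x, -, hx⟩ := exists_min_image univ f univ_nonempty
  refine ⟨x, ?_⟩
  calc f x = ∑ a, P a * f x := by rw [← sum_mul, hP.2, one_mul]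
    _ ≤ ∑ a, P a * f a := sum_le_sum fun a ha => mul_le_mul_of_nonneg_left (hx a ha) (hP.1 a)

lemma exists_mem_inter_of_one_lt (hP : IsPMF P) {s t : Finset α}
    (h : 1 < ∑ x ∈ s, P x + ∑ x ∈ t, P x) : ∃ x, x ∈ s ∧ x ∈ t := by
  by_contra! hst
  rw [← sum_union (disjoint_left.2 hst)] at h
  exact h.not_ge (hP.sum_le_one _)

variable [DecidableEq ι]

protected lemma pi {κ : ι → Type*} [∀ i, Fintype (κ i)] {p : ∀ i, κ i → ℝ}
    (hp : ∀ i, IsPMF (p i)) : IsPMF fun y : ∀ i, κ i => ∏ i, p i (y i) :=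
  ⟨fun _ => prod_nonneg fun i _ => (hp i).1 _, sum_pi_prod_eq_one fun i => (hp i).2⟩

lemma sum_pi_prod_filter_le {κ : ι → Type*} [∀ i, Fintype (κ i)] {p g : ∀ i, κ i → ℝ}
    (hp : ∀ i, IsPMF (p i)) (hg : ∀ i, ∑ a, p i a * g i a = 0) {t : ℝ} (ht : 0 < t) :
    ∑ y : ∀ i, κ i with t ≤ ∑ i, g i (y i), ∏ i, p i (y i) ≤
      (∑ i, ∑ a, p i a * g i a ^ 2) / t ^ 2 := by
  have hpos := (IsPMF.pi hp).1
  rw [le_div_iff₀ (by positivity), ← sum_pi_prod_mul_sum_sq (fun i => (hp i).2) hg, sum_mul]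
  calc ∑ y : ∀ i, κ i with t ≤ ∑ i, g i (y i), (∏ i, p i (y i)) * t ^ 2
      ≤ ∑ y : ∀ i, κ i with t ≤ ∑ i, g i (y i), (∏ i, p i (y i)) * (∑ i, g i (y i)) ^ 2 := by
        refine sum_le_sum fun y hy => mul_le_mul_of_nonneg_left ?_ (hpos y)
        exact pow_le_pow_left₀ ht.le (mem_filter.1 hy).2 2
    _ ≤ ∑ y : ∀ i, κ i, (∏ i, p i (y i)) * (∑ i, g i (y i)) ^ 2 :=
        sum_le_univ_sum_of_nonneg fun y => mul_nonneg (hpos y) (sq_nonneg _)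

lemma sum_pi_prod_mul_mean_sub_expect_sq_le [Nonempty ι] (hP : IsPMF P) (f : α → ℝ) :
    ∑ u : ι → α, (∏ i, P (u i)) * (∑ x, P x * f x - 𝔼 i, f (u i)) ^ 2 ≤
      (∑ x, P x * f x ^ 2) / Fintype.card ι := by
  set μ := ∑ x, P x * f x
  set N := (Fintype.card ι : ℝ) with hNcard
  have hN : N ≠ 0 := by simp [N]
  have hdev (u : ι → α) : μ - 𝔼 i, f (u i) = -((∑ i, (f (u i) - μ)) / N) := by
    rw [Fintype.expect_eq_sum_div_card, sum_sub_distrib, sum_const, card_univ, nsmul_eq_mul]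
    field_simp
    ring
  calc ∑ u : ι → α, (∏ i, P (u i)) * (μ - 𝔼 i, f (u i)) ^ 2
      = (∑ u : ι → α, (∏ i, P (u i)) * (∑ i, (f (u i) - μ)) ^ 2) / N ^ 2 := by
        rw [sum_div]
        refine sum_congr rfl fun u _ => ?_
        rw [hdev, neg_sq, div_pow, mul_div_assoc]
    _ = (∑ x, P x * (f x - μ) ^ 2) / N := by
        rw [sum_pi_prod_mul_sum_sq (p := fun _ => P) (g := fun _ x => f x - μ) (fun _ => hP.2)
          fun _ => sum_mul_sub_mean hP.2 f, sum_const, card_univ, nsmul_eq_mul, ← hNcard]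
        field_simp
    _ ≤ (∑ x, P x * f x ^ 2) / N :=
        div_le_div_of_nonneg_right (sum_mul_sub_mean_sq_le hP.2 f) (Nat.cast_nonneg _)

lemma sq_sum_pi_prod_mul_abs_mean_sub_expect_le [Nonempty ι] (hP : IsPMF P) {f : α → ℝ} {c : ℝ}
    (hf : ∀ x, 0 ≤ f x) (hfc : ∀ x, f x ≤ c) :
    (∑ u : ι → α, (∏ i, P (u i)) * |∑ x, P x * f x - 𝔼 i, f (u i)|) ^ 2 ≤
      c * ((∑ x, P x * f x) / Fintype.card ι) := by
  have hlaw : IsPMF fun u : ι → α => ∏ i, P (u i) := IsPMF.pi fun _ => hP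
  calc (∑ u : ι → α, (∏ i, P (u i)) * |∑ x, P x * f x - 𝔼 i, f (u i)|) ^ 2
      ≤ ∑ u : ι → α, (∏ i, P (u i)) * |∑ x, P x * f x - 𝔼 i, f (u i)| ^ 2 :=
        Real.pow_arith_mean_le_arith_mean_pow_of_even _ _ _ (fun u _ => hlaw.1 u) hlaw.2 even_two
    _ ≤ (∑ x, P x * f x ^ 2) / Fintype.card ι := by
        simp only [sq_abs]
        exact hP.sum_pi_prod_mul_mean_sub_expect_sq_le f
    _ ≤ (∑ x, c * (P x * f x)) / Fintype.card ι := by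
        gcongr (∑ x, ?_) / _ with x
        rw [mul_left_comm, sq]
        exact mul_le_mul_of_nonneg_left (mul_le_mul_of_nonneg_right (hfc x) (hf x)) (hP.1 x)
    _ = c * ((∑ x, P x * f x) / Fintype.card ι) := by rw [← mul_sum, mul_div_assoc]

end IsPMF

lemma IsChannel.isPMF {α β : Type*} [Fintype β] {K : α → β → ℝ} (hK : IsChannel K) (x : α) :
    IsPMF (K x) :=
  ⟨hK.1 x, hK.2 x⟩

section OutputDistribution

variable {α β : Type*} [Fintype α]

/-- The output distribution `PK` of the kernel `K` under the input distribution `P`. The kernel may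
be substochastic. -/
def outDist (P : α → ℝ) (K : α → β → ℝ) (y : β) : ℝ :=
  ∑ x, P x * K x y

lemma sum_mul_sum_eq_sum_outDist (P : α → ℝ) (K : α → β → ℝ) (D : Finset β) :
    ∑ x, P x * ∑ y ∈ D, K x y = ∑ y ∈ D, outDist P K y := by
  simp_rw [mul_sum, outDist]
  exact sum_comm

lemma IsPMF.mul_le_outDist {P : α → ℝ} {K : α → β → ℝ} (hP : IsPMF P) (hK : ∀ x y, 0 ≤ K x y)
    (x : α) (y : β) : P x * K x y ≤ outDist P K y :=
  single_le_sum (f := fun x => P x * K x y) (fun x _ => mul_nonneg (hP.1 x) (hK x y)) (mem_univ x)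

variable [Fintype β]

protected lemma IsPMF.outDist {P : α → ℝ} {K : α → β → ℝ} (hP : IsPMF P) (hK : IsChannel K) :
    IsPMF (outDist P K) := by
  refine ⟨fun y => sum_nonneg fun x _ => mul_nonneg (hP.1 x) (hK.1 x y), ?_⟩
  rw [← sum_mul_sum_eq_sum_outDist]
  simp_rw [hK.2, mul_one, hP.2]

-- A random codebook with i.i.d. entries of law `P` deviates at `y` on average by at most
-- `√(ν y · PV(y) / |ι|)`; summing over `y` uses Cauchy-Schwarz.
theorem exists_codebook_sum_abs_sub_sq_le {ι : Type*} [Fintype ι] [Nonempty ι] {P : α → ℝ}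
    (hP : IsPMF P) {V : α → β → ℝ} (hV : ∀ x y, 0 ≤ V x y) (hV1 : ∀ x, ∑ y, V x y ≤ 1) {ν : β → ℝ}
    (hVν : ∀ x y, V x y ≤ ν y) :
    ∃ u : ι → α,
      (∑ y, |outDist P V y - 𝔼 i, V (u i) y|) ^ 2 ≤ (∑ y, ν y) / Fintype.card ι := by
  set N := (Fintype.card ι : ℝ)
  set law : (ι → α) → ℝ := fun u => ∏ i, P (u i)
  have hlaw : IsPMF law := IsPMF.pi fun _ => hP
  set dev : (ι → α) → β → ℝ := fun u y => |outDist P V y - 𝔼 i, V (u i) y|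
  have hν (y : β) : 0 ≤ ν y := let ⟨x⟩ := hP.nonempty; (hV x y).trans (hVν x y)
  have hout (y : β) : 0 ≤ outDist P V y := sum_nonneg fun x _ => mul_nonneg (hP.1 x) (hV x y)
  have hmean_sq (y : β) : (∑ u, law u * dev u y) ^ 2 ≤ ν y * (outDist P V y / N) :=
    hP.sq_sum_pi_prod_mul_abs_mean_sub_expect_le (fun x => hV x y) fun x => hVν x y
  have hout_sum : ∑ y, outDist P V y ≤ 1 := by
    rw [← sum_mul_sum_eq_sum_outDist, ← hP.2]
    exact sum_le_sum fun x _ => mul_le_of_le_one_right (hP.1 x) (hV1 x)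
  obtain ⟨u, hu⟩ := hlaw.exists_le_sum_mul fun u => ∑ y, dev u y
  refine ⟨u, ?_⟩
  calc (∑ y, dev u y) ^ 2
      ≤ (∑ u, law u * ∑ y, dev u y) ^ 2 :=
        pow_le_pow_left₀ (sum_nonneg fun y _ => abs_nonneg _) hu 2
    _ = (∑ y, ∑ u, law u * dev u y) ^ 2 := by
        simp_rw [mul_sum]
        rw [sum_comm]
    _ ≤ (∑ y, ν y) * ∑ y, outDist P V y / N :=
        sum_sq_le_sum_mul_sum_of_sq_le_mul univ (fun y _ => hν y)
          (fun y _ => div_nonneg (hout y) (Nat.cast_nonneg _)) fun y _ => hmean_sq y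
    _ = (∑ y, ν y) * (∑ y, outDist P V y) / N := by rw [← sum_div, mul_div_assoc]
    _ ≤ (∑ y, ν y) / N := by
        gcongr
        exact mul_le_of_le_one_right (sum_nonneg fun y _ => hν y) hout_sum

end OutputDistribution

section OneShot

variable {α β : Type*} {K : α → β → ℝ} {G : Finset α} {ν : β → ℝ} {δ : ℝ}

/-- The part of the channel `K` that is kept for soft covering: the input is not in the exceptional
set `G` and the transition probability does not exceed the dominating weight `ν`. -/
def dominatedPart (K : α → β → ℝ) (G : Finset α) (ν : β → ℝ) (x : α) (y : β) : ℝ :=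
  if x ∉ G ∧ K x y ≤ ν y then K x y else 0

lemma dominatedPart_nonneg (hK : ∀ x y, 0 ≤ K x y) (x : α) (y : β) :
    0 ≤ dominatedPart K G ν x y := by
  unfold dominatedPart
  split_ifs
  exacts [hK x y, le_rfl]

lemma dominatedPart_le (hK : ∀ x y, 0 ≤ K x y) (x : α) (y : β) :
    dominatedPart K G ν x y ≤ K x y := by
  unfold dominatedPart
  split_ifs
  exacts [le_rfl, hK x y]

lemma dominatedPart_le_weight (hν : ∀ y, 0 ≤ ν y) (x : α) (y : β) :
    dominatedPart K G ν x y ≤ ν y := by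
  unfold dominatedPart
  split_ifs with h
  exacts [h.2, hν y]

variable [Fintype β]

lemma sum_le_sum_dominatedPart_add (hK : IsChannel K) (hδ : 0 ≤ δ)
    (htail : ∀ x ∉ G, ∑ y with ν y < K x y, K x y ≤ δ) (x : α) (D : Finset β) :
    ∑ y ∈ D, K x y ≤ ∑ y ∈ D, dominatedPart K G ν x y + ((if x ∈ G then 1 else 0) + δ) := by
  rw [← sub_le_iff_le_add', ← sum_sub_distrib]
  refine (sum_le_univ_sum_of_nonneg fun y => sub_nonneg.2 (dominatedPart_le hK.1 x y)).trans ?_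
  by_cases hx : x ∈ G
  · simp [dominatedPart, hx, hK.2, hδ]
  · calc ∑ y, (K x y - dominatedPart K G ν x y)
        = ∑ y with ν y < K x y, K x y := by
          rw [sum_filter]
          refine sum_congr rfl fun y _ => ?_
          by_cases hy : ν y < K x y <;> simp [dominatedPart, hx, hy, not_lt.1, not_le.2]
      _ ≤ (if x ∈ G then 1 else 0) + δ := by simpa [hx] using htail x hx

lemma sum_sub_le_of_sum_abs_sub_le {f g h : β → ℝ} (hf : ∑ y, |f y - h y| ≤ δ)
    (hg : ∑ y, |g y - h y| ≤ δ) (D : Finset β) : ∑ y ∈ D, (f y - g y) ≤ 2 * δ :=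
  calc ∑ y ∈ D, (f y - g y)
      ≤ ∑ y ∈ D, (|f y - h y| + |g y - h y|) :=
        sum_le_sum fun y _ => by linarith [le_abs_self (f y - h y), neg_abs_le (g y - h y)]
    _ ≤ ∑ y, (|f y - h y| + |g y - h y|) := sum_le_univ_sum_of_nonneg fun y => by positivity
    _ ≤ 2 * δ := by
        rw [sum_add_distrib]
        linarith

lemma sub_le_expect_of_card_le {ι : Type*} [Fintype ι] [Nonempty ι] {f : ι → ℝ}
    (hf : ∀ i, 0 ≤ f i) {c : ℝ} (hc : c ≤ 1) (hcard : #{i | f i < c} ≤ δ * Fintype.card ι) :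
    c - δ ≤ 𝔼 i, f i := by
  have hpointwise (i : ι) : c - (if f i < c then 1 else 0) ≤ f i := by
    split_ifs with hi
    · linarith [hf i]
    · linarith
  calc c - δ ≤ c - (#{i | f i < c} : ℝ) / Fintype.card ι :=
        sub_le_sub_left ((div_le_iff₀ (mod_cast Fintype.card_pos)).2 hcard) c
    _ = 𝔼 i, (c - if f i < c then 1 else 0) := by
        rw [expect_sub_distrib, Fintype.expect_const, Fintype.expect_eq_sum_div_card, sum_boole]
    _ ≤ 𝔼 i, f i := expect_le_expect fun i _ => hpointwise i

variable [Fintype α]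

lemma IsPMF.sum_outDist_le_dominatedPart_add {P : α → ℝ} (hP : IsPMF P) (hK : IsChannel K)
    (hδ : 0 ≤ δ) (htail : ∀ x ∉ G, ∑ y with ν y < K x y, K x y ≤ δ) (D : Finset β) :
    ∑ y ∈ D, outDist P K y ≤
      ∑ y ∈ D, outDist P (dominatedPart K G ν) y + (∑ x ∈ G, P x + δ) := by
  calc ∑ y ∈ D, outDist P K y
      = ∑ x, P x * ∑ y ∈ D, K x y := (sum_mul_sum_eq_sum_outDist P K D).symm
    _ ≤ ∑ x, P x * (∑ y ∈ D, dominatedPart K G ν x y + ((if x ∈ G then 1 else 0) + δ)) :=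
        sum_le_sum fun x _ => mul_le_mul_of_nonneg_left
          (sum_le_sum_dominatedPart_add hK hδ htail x D) (hP.1 x)
    _ = ∑ y ∈ D, outDist P (dominatedPart K G ν) y + (∑ x ∈ G, P x + δ) := by
        simp_rw [mul_add, sum_add_distrib, sum_mul_sum_eq_sum_outDist, ← sum_mul, hP.2]
        simp [sum_ite_mem]

lemma IsPMF.sum_outDist_sub_le_of_common_approx {P P' : α → ℝ} (hP : IsPMF P) (hP' : IsPMF P')
    (hK : IsChannel K) (hδ : 0 ≤ δ) (htail : ∀ x ∉ G, ∑ y with ν y < K x y, K x y ≤ δ) {h : β → ℝ}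
    (hPh : ∑ y, |outDist P (dominatedPart K G ν) y - h y| ≤ δ)
    (hPh' : ∑ y, |outDist P' (dominatedPart K G ν) y - h y| ≤ δ) (D : Finset β) :
    ∑ y ∈ D, (outDist P K y - outDist P' K y) ≤ ∑ x ∈ G, P x + 3 * δ := by
  have htrunc := hP.sum_outDist_le_dominatedPart_add hK hδ htail D
  have htrunc' : ∑ y ∈ D, outDist P' (dominatedPart K G ν) y ≤ ∑ y ∈ D, outDist P' K y :=
    sum_le_sum fun y _ => sum_le_sum fun x _ =>
      mul_le_mul_of_nonneg_left (dominatedPart_le hK.1 x y) (hP'.1 x)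
  have hclose := sum_sub_le_of_sum_abs_sub_le hPh hPh' D
  rw [sum_sub_distrib] at hclose ⊢
  linarith

lemma IsPMF.sum_outDist_sub_le_one {P P' : α → ℝ} (hP : IsPMF P) (hP' : IsPMF P')
    (hK : IsChannel K) (D : Finset β) : ∑ y ∈ D, (outDist P K y - outDist P' K y) ≤ 1 :=
  (sum_le_sum fun y _ => sub_le_self _ ((hP'.outDist hK).1 y)).trans ((hP.outDist hK).sum_le_one D)

-- Two messages with the same codebook have close outputs away from `G`, so all but
-- `|α| ^ |ι| ≤ δ |M|` of the messages must put mass at least `c - 3 δ` on `G`.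
theorem sub_le_sum_expect_of_separated {M ι : Type*} [Fintype M] [Nontrivial M] [Fintype ι]
    [Nonempty ι] (hK : IsChannel K) (hδ : 0 ≤ δ) (hν : ∀ y, 0 ≤ ν y)
    (htail : ∀ x ∉ G, ∑ y with ν y < K x y, K x y ≤ δ)
    (hcover : (∑ y, ν y) / Fintype.card ι ≤ δ ^ 2)
    (hcard : (Fintype.card α : ℝ) ^ Fintype.card ι ≤ δ * Fintype.card M)
    {Q : M → α → ℝ} (hQ : ∀ m, IsPMF (Q m)) {c : ℝ}
    (hsep : ∀ m m', m ≠ m' → ∃ D : Finset β,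
      c ≤ ∑ y ∈ D, (outDist (Q m) K y - outDist (Q m') K y)) :
    c - 4 * δ ≤ ∑ x ∈ G, 𝔼 m, Q m x := by
  choose u hu using fun m => exists_codebook_sum_abs_sub_sq_le (ι := ι) (hQ m)
    (dominatedPart_nonneg (G := G) (ν := ν) hK.1)
    (fun x => (sum_le_sum fun y _ => dominatedPart_le hK.1 x y).trans (hK.2 x).le)
    (dominatedPart_le_weight hν)
  have happrox (m : M) : ∑ y, |outDist (Q m) (dominatedPart K G ν) y -
      𝔼 i, dominatedPart K G ν (u m i) y| ≤ δ :=
    le_of_sq_le_sq ((hu m).trans hcover) hδ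
  have hcollision {m m' : M} (hne : m ≠ m') (huu : u m = u m') :
      c - 3 * δ ≤ ∑ x ∈ G, Q m x := by
    obtain ⟨D, hD⟩ := hsep m m' hne
    linarith [(hQ m).sum_outDist_sub_le_of_common_approx (hQ m') hK hδ htail (happrox m)
      (huu ▸ happrox m') D]
  have hc : c ≤ 1 := by
    obtain ⟨m, m', hne⟩ := exists_pair_ne M
    obtain ⟨D, hD⟩ := hsep m m' hne
    exact hD.trans ((hQ m).sum_outDist_sub_le_one (hQ m') hK D)
  have hexceptions : #{m | ∑ x ∈ G, Q m x < c - 3 * δ} ≤ Fintype.card (ι → α) :=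
    card_le_card_of_injOn u (fun _ _ => mem_univ _) fun m hm m' _ huu => by
      by_contra hne
      exact (hcollision hne huu).not_gt (by simpa using hm)
  rw [← expect_sum_comm]
  have := sub_le_expect_of_card_le (fun m => sum_nonneg fun x _ => (hQ m).1 x)
    (by linarith : c - 3 * δ ≤ 1) (hcard.trans' (mod_cast Fintype.card_fun (α := ι) (β := α) ▸
      hexceptions))
  linarith

end OneShot

section Types

variable {X : Type*} {n : ℕ}

/-- The type of the sequence `x`, i.e. its empirical distribution. For `n = 0` it is `0`, which is
not a PMF. -/
def empType (x : Fin n → X) (a : X) : ℝ :=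
  #{i | x i = a} / n

lemma empType_pos (x : Fin n → X) (i : Fin n) : 0 < empType x (x i) := by
  have : 0 < #{j | x j = x i} := card_pos.2 ⟨i, by simp⟩
  have := i.pos
  unfold empType
  positivity

variable [Fintype X]

lemma sum_empType_mul (x : Fin n → X) (h : X → ℝ) :
    ∑ a, empType x a * h a = 𝔼 i, h (x i) := by
  rw [Fintype.expect_eq_sum_div_card, Fintype.card_fin, ← sum_fiberwise univ x, sum_div]
  refine sum_congr rfl fun a _ => ?_
  rw [sum_congr rfl fun i hi => congrArg h (mem_filter.1 hi).2, sum_const, nsmul_eq_mul, empType]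
  ring

lemma isPMF_empType [NeZero n] (x : Fin n → X) : IsPMF (empType x) :=
  ⟨fun a => by unfold empType; positivity, by simpa using sum_empType_mul x fun _ => 1⟩

/-- The set of all types of sequences of length `n` over `X`. -/
def types (X : Type*) [Fintype X] (n : ℕ) : Finset (X → ℝ) :=
  univ.image fun x : Fin n → X => empType x

lemma empType_mem_types (x : Fin n → X) : empType x ∈ types X n :=
  mem_image_of_mem _ (mem_univ x)

lemma isPMF_of_mem_types [NeZero n] {P : X → ℝ} (hP : P ∈ types X n) : IsPMF P := by
  obtain ⟨x, -, rfl⟩ := mem_image.1 hP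
  exact isPMF_empType x

lemma card_types_le (X : Type*) [Fintype X] (n : ℕ) :
    #(types X n) ≤ (n + 1) ^ Fintype.card X := by
  have hsub : types X n ⊆ univ.image fun (c : X → Fin (n + 1)) a => ((c a : ℕ) : ℝ) / n := by
    refine image_subset_iff.2 fun x _ =>
      mem_image.2 ⟨fun a => ⟨#{i | x i = a}, ?_⟩, mem_univ _, rfl⟩
    exact Nat.lt_succ_of_le ((card_le_univ _).trans_eq (Fintype.card_fin n))
  calc #(types X n) ≤ Fintype.card (X → Fin (n + 1)) := (card_le_card hsub).trans card_image_le
    _ = (n + 1) ^ Fintype.card X := by rw [Fintype.card_fun, Fintype.card_fin]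

end Types

section InformationDensity

variable {X Y : Type*} [Fintype X] {P : X → ℝ} {W : X → Y → ℝ}

/-- The information density `log (W(y|x) / PW(y))`, whose mean under `P × W` is the mutual
information. It is `0` where `W x y` or `outDist P W y` is `0`. -/
def infoDensity (P : X → ℝ) (W : X → Y → ℝ) (x : X) (y : Y) : ℝ :=
  Real.log (W x y / outDist P W y)

lemma mul_log_sq_le_four {t : ℝ} (h0 : 0 < t) (h1 : t ≤ 1) : t * Real.log t ^ 2 ≤ 4 := by
  have h := (Real.abs_log_mul_self_rpow_lt t (1 / 2) h0 h1 (by norm_num)).le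
  rw [← Real.sqrt_eq_rpow] at h
  calc t * Real.log t ^ 2 = |Real.log t * √t| ^ 2 := by
        rw [sq_abs, mul_pow, Real.sq_sqrt h0.le, mul_comm]
    _ ≤ (1 / (1 / 2)) ^ 2 := pow_le_pow_left₀ (abs_nonneg _) h 2
    _ = 4 := by norm_num

lemma mul_mul_log_div_sq_le_eight {p w q : ℝ} (hp : 0 ≤ p) (hp1 : p ≤ 1) (hw : 0 ≤ w)
    (hw1 : w ≤ 1) (hpq : p * w ≤ q) (hq1 : q ≤ 1) : p * (w * Real.log (w / q) ^ 2) ≤ 8 := by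
  obtain rfl | hp0 := hp.eq_or_lt
  · norm_num
  obtain rfl | hw0 := hw.eq_or_lt
  · norm_num
  have hq0 : 0 < q := (mul_pos hp0 hw0).trans_le hpq
  have hupper : Real.log (w / q) ≤ -Real.log p := by
    rw [← Real.log_inv]
    refine Real.log_le_log (by positivity) ?_
    rwa [div_le_iff₀ hq0, inv_mul_eq_div, le_div_iff₀' hp0]
  have hlower : Real.log w ≤ Real.log (w / q) :=
    Real.log_le_log hw0 (le_div_self hw hq0 hq1)
  have hsq : Real.log (w / q) ^ 2 ≤ Real.log p ^ 2 + Real.log w ^ 2 := by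
    rcases le_total 0 (Real.log (w / q)) with h | h
    · nlinarith [sq_nonneg (Real.log w)]
    · nlinarith [sq_nonneg (Real.log p)]
  calc p * (w * Real.log (w / q) ^ 2) ≤ p * (w * (Real.log p ^ 2 + Real.log w ^ 2)) := by gcongr
    _ = w * (p * Real.log p ^ 2) + p * (w * Real.log w ^ 2) := by ring
    _ ≤ 1 * 4 + 1 * 4 := by
        gcongr
        exacts [mul_log_sq_le_four hp0 hp1, mul_log_sq_le_four hw0 hw1]
    _ = 8 := by norm_num

lemma lt_sum_infoDensity_of_exp_mul_lt {n : ℕ} (hP : IsPMF P) (hW : ∀ x y, 0 ≤ W x y)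
    {x : Fin n → X} (hx : ∀ i, 0 < P (x i)) {y : Fin n → Y} {t : ℝ}
    (h : Real.exp t * ∏ i, outDist P W (y i) < Wn W n x y) :
    t < ∑ i, infoDensity P W (x i) (y i) := by
  have hout_nonneg (b : Y) : 0 ≤ outDist P W b :=
    sum_nonneg fun a _ => mul_nonneg (hP.1 a) (hW a b)
  have hprod_pos : 0 < Wn W n x y :=
    (mul_nonneg (Real.exp_pos t).le (prod_nonneg fun i _ => hout_nonneg _)).trans_lt h
  have hW_pos (i : Fin n) : 0 < W (x i) (y i) :=
    (hW _ _).lt_of_ne' fun h0 => hprod_pos.ne' (prod_eq_zero (mem_univ i) h0)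
  have hout_pos (i : Fin n) : 0 < outDist P W (y i) :=
    (mul_pos (hx i) (hW_pos i)).trans_le (hP.mul_le_outDist hW _ _)
  have hlog : ∑ i, infoDensity P W (x i) (y i) =
      Real.log (Wn W n x y / ∏ i, outDist P W (y i)) := by
    unfold infoDensity Wn
    rw [← Real.log_prod fun i _ => (div_pos (hW_pos i) (hout_pos i)).ne', prod_div_distrib]
  have hprod_out : 0 < ∏ i, outDist P W (y i) := prod_pos fun i _ => hout_pos i
  rwa [hlog, Real.lt_log_iff_exp_lt (div_pos hprod_pos hprod_out), lt_div_iff₀ hprod_out]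

variable [Fintype Y]

lemma mutInf_eq_sum_infoDensity (P : X → ℝ) (W : X → Y → ℝ) :
    mutInf P W = ∑ x, P x * ∑ y, W x y * infoDensity P W x y := by
  simp_rw [mul_sum, ← mul_assoc]
  refine sum_congr rfl fun x _ => sum_congr rfl fun y _ => ?_
  split_ifs with h
  · rw [h, zero_mul]
  · rfl

lemma mutInf_nonneg (hP : IsPMF P) (hW : IsChannel W) : 0 ≤ mutInf P W := by
  have hpointwise (x : X) (y : Y) :
      P x * (W x y - outDist P W y) ≤ P x * (W x y * infoDensity P W x y) := by
    obtain hPx | hPx := (hP.1 x).eq_or_lt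
    · simp [← hPx]
    refine mul_le_mul_of_nonneg_left ?_ hPx.le
    obtain hWxy | hWxy := (hW.1 x y).eq_or_lt
    · simpa [← hWxy] using (hP.outDist hW).1 y
    have hout : 0 < outDist P W y := (mul_pos hPx hWxy).trans_le (hP.mul_le_outDist hW.1 x y)
    calc W x y - outDist P W y = W x y * (1 - (W x y / outDist P W y)⁻¹) := by field_simp
      _ ≤ W x y * infoDensity P W x y :=
        mul_le_mul_of_nonneg_left (Real.one_sub_inv_le_log_of_pos (div_pos hWxy hout)) hWxy.le
  rw [mutInf_eq_sum_infoDensity]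
  calc (0 : ℝ) = ∑ x, P x * ∑ y, (W x y - outDist P W y) := by
        simp_rw [sum_sub_distrib, hW.2, (hP.outDist hW).2, sub_self, mul_zero, sum_const_zero]
    _ ≤ ∑ x, P x * ∑ y, W x y * infoDensity P W x y := by
        simp_rw [mul_sum]
        exact sum_le_sum fun x _ => sum_le_sum fun y _ => hpointwise x y

lemma sum_mul_sum_mul_infoDensity_sq_le (hP : IsPMF P) (hW : IsChannel W) :
    ∑ x, P x * ∑ y, W x y * infoDensity P W x y ^ 2 ≤ 8 * Fintype.card X * Fintype.card Y :=
  calc ∑ x, P x * ∑ y, W x y * infoDensity P W x y ^ 2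
      ≤ ∑ _x : X, ∑ _y : Y, (8 : ℝ) := by
        simp_rw [mul_sum]
        exact sum_le_sum fun x _ => sum_le_sum fun y _ => mul_mul_log_div_sq_le_eight (hP.1 x)
          (hP.le_one x) (hW.1 x y) ((hW.isPMF x).le_one y) (hP.mul_le_outDist hW.1 x y)
          ((hP.outDist hW).le_one y)
    _ = 8 * Fintype.card X * Fintype.card Y := by
        simp only [sum_const, card_univ, nsmul_eq_mul]
        ring

end InformationDensity

section MemorylessExtension

variable {X Y : Type*} [Fintype Y] {W : X → Y → ℝ} {n : ℕ}

lemma isChannel_Wn (hW : IsChannel W) (n : ℕ) : IsChannel (Wn W n) :=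
  ⟨fun x => (IsPMF.pi fun i => hW.isPMF (x i)).1, fun x => (IsPMF.pi fun i => hW.isPMF (x i)).2⟩

variable [Fintype X]

-- Given `x`, the sum of the information densities has mean `n I(P_x, W)`; apply Chebyshev.
lemma sum_Wn_filter_exp_mul_lt_le [NeZero n] (hW : IsChannel W) (x : Fin n → X) {γ : ℝ}
    (hγ : 0 < γ) :
    ∑ y with Real.exp (n * (mutInf (empType x) W + γ)) * ∏ i, outDist (empType x) W (y i) <
        Wn W n x y, Wn W n x y ≤ 8 * Fintype.card X * Fintype.card Y / (n * γ ^ 2) := by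
  set P := empType x
  have hP : IsPMF P := isPMF_empType x
  have hn : (n : ℝ) ≠ 0 := NeZero.ne _
  have hsum (h : X → ℝ) : ∑ i, h (x i) = n * ∑ a, P a * h a := by
    rw [sum_empType_mul, Fintype.expect_eq_sum_div_card, Fintype.card_fin, mul_div_cancel₀ _ hn]
  set μ : X → ℝ := fun a => ∑ b, W a b * infoDensity P W a b
  have hmean : ∑ i, μ (x i) = n * mutInf P W := by rw [hsum, mutInf_eq_sum_infoDensity]
  have hdeviation {y : Fin n → Y}
      (hy : Real.exp (n * (mutInf P W + γ)) * ∏ i, outDist P W (y i) < Wn W n x y) :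
      n * γ ≤ ∑ i, (infoDensity P W (x i) (y i) - μ (x i)) := by
    have := lt_sum_infoDensity_of_exp_mul_lt hP hW.1 (empType_pos x) hy
    rw [sum_sub_distrib, hmean]
    linarith
  calc ∑ y with Real.exp (n * (mutInf P W + γ)) * ∏ i, outDist P W (y i) < Wn W n x y, Wn W n x y
      ≤ ∑ y with n * γ ≤ ∑ i, (infoDensity P W (x i) (y i) - μ (x i)), Wn W n x y :=
        sum_le_sum_of_subset_of_nonneg (monotone_filter_right _ fun _ _ => hdeviation)
          fun y _ _ => (isChannel_Wn hW n).1 x y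
    _ ≤ (∑ i, ∑ b, W (x i) b * (infoDensity P W (x i) b - μ (x i)) ^ 2) / (n * γ) ^ 2 :=
        IsPMF.sum_pi_prod_filter_le (g := fun i b => infoDensity P W (x i) b - μ (x i))
          (fun i => hW.isPMF (x i)) (fun i => sum_mul_sub_mean (hW.2 _) _) (by positivity)
    _ ≤ (∑ i, ∑ b, W (x i) b * infoDensity P W (x i) b ^ 2) / (n * γ) ^ 2 := by
        gcongr (∑ i, ?_) / _ with i
        exact sum_mul_sub_mean_sq_le (hW.2 _) _
    _ = n * (∑ a, P a * ∑ b, W a b * infoDensity P W a b ^ 2) / (n * γ) ^ 2 := by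
        rw [hsum fun a => ∑ b, W a b * infoDensity P W a b ^ 2]
    _ ≤ n * (8 * Fintype.card X * Fintype.card Y) / (n * γ) ^ 2 := by
        gcongr
        exact sum_mul_sum_mul_infoDensity_sq_le hP hW
    _ = 8 * Fintype.card X * Fintype.card Y / (n * γ ^ 2) := by field_simp

/-- The mixture, up to normalization, of the memoryless output laws of all types. It dominates each
of them, at the cost of only polynomial total mass. -/
def universalOutput (W : X → Y → ℝ) (n : ℕ) (y : Fin n → Y) : ℝ :=
  ∑ P ∈ types X n, ∏ i, outDist P W (y i)

lemma universalOutput_nonneg [NeZero n] (hW : IsChannel W) (y : Fin n → Y) :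
    0 ≤ universalOutput W n y :=
  sum_nonneg fun _ hP => prod_nonneg fun i _ => ((isPMF_of_mem_types hP).outDist hW).1 (y i)

lemma prod_outDist_le_universalOutput [NeZero n] (hW : IsChannel W) (x : Fin n → X)
    (y : Fin n → Y) : ∏ i, outDist (empType x) W (y i) ≤ universalOutput W n y :=
  single_le_sum (f := fun P => ∏ i, outDist P W (y i))
    (fun _ hP => prod_nonneg fun i _ => ((isPMF_of_mem_types hP).outDist hW).1 (y i))
    (empType_mem_types x)

lemma sum_universalOutput_le [NeZero n] (hW : IsChannel W) :
    ∑ y, universalOutput W n y ≤ ((n : ℝ) + 1) ^ Fintype.card X := by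
  calc ∑ y, universalOutput W n y
      = ∑ P ∈ types X n, ∑ y : Fin n → Y, ∏ i, outDist P W (y i) := sum_comm
    _ = ∑ P ∈ types X n, 1 := sum_congr rfl fun P hP =>
        sum_pi_prod_eq_one fun _ => ((isPMF_of_mem_types hP).outDist hW).2
    _ = #(types X n) := by rw [sum_const, nsmul_one]
    _ ≤ ((n : ℝ) + 1) ^ Fintype.card X := mod_cast card_types_le X n

lemma sum_Wn_filter_universalOutput_lt_le [NeZero n] (hW : IsChannel W) (x : Fin n → X)
    {r γ : ℝ} (hγ : 0 < γ) (hr : mutInf (empType x) W + γ ≤ r) :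
    ∑ y with Real.exp (n * r) * universalOutput W n y < Wn W n x y, Wn W n x y ≤
      8 * Fintype.card X * Fintype.card Y / (n * γ ^ 2) := by
  refine (sum_le_sum_of_subset_of_nonneg (monotone_filter_right _ fun y _ => ?_)
    fun y _ _ => (isChannel_Wn hW n).1 x y).trans (sum_Wn_filter_exp_mul_lt_le hW x hγ)
  refine lt_of_le_of_lt ?_
  gcongr
  · exact prod_nonneg fun i _ => ((isPMF_empType x).outDist hW).1 (y i)
  · exact prod_outDist_le_universalOutput hW x y

end MemorylessExtension

section Growth

lemma eventually_mul_pow_mul_exp_le (C : ℝ) (a : ℕ) {r s : ℝ} (hrs : r < s) :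
    ∀ᶠ n : ℕ in atTop, C * ((n : ℝ) + 1) ^ a * Real.exp (n * r) ≤ Real.exp (n * s) := by
  have hlittle := ((isLittleO_pow_exp_pos_mul_atTop a (sub_pos.2 hrs)).const_mul_left
    (C * Real.exp (s - r))).comp_tendsto
      (tendsto_atTop_add_const_right _ (1 : ℝ) tendsto_natCast_atTop_atTop)
  filter_upwards [hlittle.bound one_pos] with n hn
  simp only [Function.comp_apply, one_mul, Real.norm_eq_abs, Real.abs_exp] at hn
  have hbound : C * ((n : ℝ) + 1) ^ a ≤ Real.exp ((s - r) * n) := by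
    refine le_of_mul_le_mul_right ?_ (Real.exp_pos (s - r))
    rw [← Real.exp_add, ← mul_add_one, mul_right_comm]
    exact (le_abs_self _).trans hn
  calc C * ((n : ℝ) + 1) ^ a * Real.exp (n * r)
      ≤ Real.exp ((s - r) * n) * Real.exp (n * r) := by gcongr
    _ = Real.exp (n * s) := by rw [← Real.exp_add]; ring_nf

-- Any codebook size `⌈exp (n ρ)⌉` with `max r 0 < ρ < R` works.
lemma eventually_exists_codebook_size (a c : ℕ) {r R δ : ℝ} (hR : 0 < R) (hr : r < R)
    (hδ : 0 < δ) : ∀ᶠ n : ℕ in atTop, ∃ N : ℕ, 0 < N ∧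
      ((n : ℝ) + 1) ^ a * Real.exp (n * r) / N ≤ δ ^ 2 ∧
      ((c : ℝ) ^ n) ^ N ≤ δ * Real.exp (Real.exp (n * R)) := by
  obtain ⟨ρ, hrρ, hρR⟩ := exists_between (max_lt hr hR)
  obtain ⟨hrρ, hρ⟩ := max_lt_iff.1 hrρ
  set L := Real.log c
  have hL : 0 ≤ L := Real.log_natCast_nonneg c
  filter_upwards [eventually_mul_pow_mul_exp_le (δ ^ 2)⁻¹ a hrρ,
    eventually_mul_pow_mul_exp_le (2 * L + |Real.log δ|) 1 hρR] with n hcover hcount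
  have hE : 1 ≤ Real.exp (n * ρ) := Real.one_le_exp (by positivity)
  refine ⟨⌈Real.exp (n * ρ)⌉₊, Nat.ceil_pos.2 (Real.exp_pos _), ?_, ?_⟩
  · rw [div_le_iff₀ (by positivity), ← inv_mul_le_iff₀ (by positivity), ← mul_assoc]
    exact hcover.trans (Nat.le_ceil _)
  · set N := ⌈Real.exp (n * ρ)⌉₊
    have hN : (N : ℝ) ≤ 2 * Real.exp (n * ρ) := by
      linarith [Nat.ceil_lt_add_one (Real.exp_pos (n * ρ)).le]
    have hexponent : N * (n * L) ≤ Real.log δ + Real.exp (n * R) := by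
      calc N * (n * L) ≤ 2 * Real.exp (n * ρ) * ((n + 1) * L) :=
            mul_le_mul hN (mul_le_mul_of_nonneg_right (by linarith) hL) (by positivity)
              (by positivity)
        _ = (2 * L + |Real.log δ|) * ((n : ℝ) + 1) ^ 1 * Real.exp (n * ρ) -
            |Real.log δ| * ((n + 1) * Real.exp (n * ρ)) := by ring
        _ ≤ Real.exp (n * R) - |Real.log δ| * 1 := by
            gcongr
            exact one_le_mul_of_one_le_of_one_le (by simp) hE
        _ ≤ Real.log δ + Real.exp (n * R) := by linarith [neg_abs_le (Real.log δ)]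
    calc ((c : ℝ) ^ n) ^ N ≤ (Real.exp L ^ n) ^ N := by
          gcongr
          exact Real.le_exp_log _
      _ = Real.exp (N * (n * L)) := by rw [← Real.exp_nat_mul, ← Real.exp_nat_mul]
      _ ≤ Real.exp (Real.log δ + Real.exp (n * R)) := Real.exp_le_exp.2 hexponent
      _ = δ * Real.exp (Real.exp (n * R)) := by rw [Real.exp_add, Real.exp_log hδ]

end Growth

section SingleReceiver

variable {X Y : Type*} [Fintype X] [Fintype Y] {W : X → Y → ℝ}

lemma IsIDCode.le_sum_outDist_sub {M : Type*} {n : ℕ} {Q : M → (Fin n → X) → ℝ}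
    {D : M → Finset (Fin n → Y)} {l1 l2 : ℝ} (hcode : IsIDCode n W Q D l1 l2) (hW : IsChannel W)
    {m m' : M} (hne : m ≠ m') :
    1 - l1 - l2 ≤ ∑ y ∈ D m, (outDist (Q m) (Wn W n) y - outDist (Q m') (Wn W n) y) := by
  obtain ⟨hQ, hmiss, hfalse⟩ := hcode
  have hmiss := hmiss m
  have hfalse := hfalse m' m hne.symm
  have htotal := ((hQ m).outDist (isChannel_Wn hW n)).2
  rw [sum_mul_sum_eq_sum_outDist] at hmiss hfalse
  rw [← sum_add_sum_compl (D m)] at htotal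
  rw [sum_sub_distrib]
  linarith

lemma IsIDCode.error_add_nonneg {M : Type*} [Nontrivial M] {n : ℕ} {Q : M → (Fin n → X) → ℝ}
    {D : M → Finset (Fin n → Y)} {l1 l2 : ℝ} (hcode : IsIDCode n W Q D l1 l2) (hW : IsChannel W) :
    0 ≤ l1 + l2 := by
  obtain ⟨m, m', hne⟩ := exists_pair_ne M
  linarith [hcode.le_sum_outDist_sub hW hne,
    (hcode.1 m).sum_outDist_sub_le_one (hcode.1 m') (isChannel_Wn hW n) (D m)]

lemma IsIDCode.sub_le_sum_expect {M : Type*} [Fintype M] [Nontrivial M] {n N : ℕ} [NeZero n]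
    [NeZero N] {Q : M → (Fin n → X) → ℝ} {D : M → Finset (Fin n → Y)} {l1 l2 r γ δ : ℝ}
    (hcode : IsIDCode n W Q D l1 l2) (hW : IsChannel W) (hγ : 0 < γ) (hδ : 0 ≤ δ)
    (htail : 8 * Fintype.card X * Fintype.card Y / (n * γ ^ 2) ≤ δ)
    (hcover : ((n : ℝ) + 1) ^ Fintype.card X * Real.exp (n * r) / N ≤ δ ^ 2)
    (hcard : ((Fintype.card X : ℝ) ^ n) ^ N ≤ δ * Fintype.card M) :
    1 - l1 - l2 - 4 * δ ≤ ∑ x with r < mutInf (empType x) W + γ, 𝔼 m, Q m x := by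
  refine sub_le_sum_expect_of_separated (ι := Fin N) (isChannel_Wn hW n) hδ
    (ν := fun y => Real.exp (n * r) * universalOutput W n y)
    (fun y => mul_nonneg (Real.exp_pos _).le (universalOutput_nonneg hW y)) (fun x hx => ?_) ?_
    (by simpa using hcard) hcode.1 fun m m' hne => ⟨D m, hcode.le_sum_outDist_sub hW hne⟩
  · have hx : mutInf (empType x) W + γ ≤ r := by simpa using hx
    exact (sum_Wn_filter_universalOutput_lt_le hW x hγ hx).trans htail
  · rw [← mul_sum, mul_comm, Fintype.card_fin]
    refine hcover.trans' ?_
    gcongr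
    exact sum_universalOutput_le hW

lemma nontrivial_of_exp_exp_le_card {M : Type*} [Fintype M] {t : ℝ}
    (hM : Real.exp (Real.exp t) ≤ Fintype.card M) : Nontrivial M := by
  rw [← Fintype.one_lt_card_iff_nontrivial]
  exact_mod_cast (Real.one_lt_exp_iff.2 (Real.exp_pos t)).trans_le hM

theorem eventually_sub_le_sum_expect_of_isIDCode (hW : IsChannel W) (R : ℝ) {ε δ : ℝ} (hε : 0 < ε)
    (hδ : 0 < δ) :
    ∀ᶠ n : ℕ in atTop, ∀ (M : Type*) [Fintype M],
      Real.exp (Real.exp (n * R)) ≤ Fintype.card M →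
      ∀ (Q : M → (Fin n → X) → ℝ) (D : M → Finset (Fin n → Y)) (l1 l2 : ℝ),
        IsIDCode n W Q D l1 l2 →
        1 - l1 - l2 - δ ≤ ∑ x with R < mutInf (empType x) W + ε, 𝔼 m, Q m x := by
  obtain hR | hR := le_or_gt R 0
  · filter_upwards [eventually_ne_atTop 0] with n hn M _ hM Q D l1 l2 hcode
    have : NeZero n := ⟨hn⟩
    have := nontrivial_of_exp_exp_le_card hM
    rw [filter_true_of_mem fun x _ => by linarith [mutInf_nonneg (isPMF_empType x) hW],
      (IsPMF.expect hcode.1).2]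
    linarith [hcode.error_add_nonneg hW]
  have hδ4 : 0 < δ / 4 := by positivity
  have htail : ∀ᶠ n : ℕ in atTop,
      8 * Fintype.card X * Fintype.card Y / (n * (ε / 2) ^ 2) ≤ δ / 4 := by
    filter_upwards [(tendsto_const_div_atTop_nhds_zero_nat (8 * Fintype.card X * Fintype.card Y /
      (ε / 2) ^ 2 : ℝ)).eventually_le_const hδ4] with n hn
    rwa [mul_comm (n : ℝ), ← div_div]
  filter_upwards [htail, eventually_ne_atTop 0, eventually_exists_codebook_size (Fintype.card X)
    (Fintype.card X) hR (sub_lt_self R (half_pos hε)) hδ4]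
    with n htail hn ⟨N, hN, hcover, hcount⟩ M _ hM Q D l1 l2 hcode
  have : NeZero n := ⟨hn⟩
  have : NeZero N := ⟨hN.ne'⟩
  have := nontrivial_of_exp_exp_le_card hM
  have hcard : ((Fintype.card X : ℝ) ^ n) ^ N ≤ δ / 4 * Fintype.card M :=
    hcount.trans (mul_le_mul_of_nonneg_left hM hδ4.le)
  have hmass := hcode.sub_le_sum_expect hW (half_pos hε) hδ4.le htail hcover hcard
  simpa only [sub_lt_iff_lt_add, add_assoc, add_halves, mul_div_cancel₀ δ four_ne_zero] using hmass

end SingleReceiver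

section BroadcastChannel

variable {X Y Z : Type*} [Fintype Y] [Fintype Z] {W : X → Y → Z → ℝ}

lemma isChannel_margY (hW : IsBC W) : IsChannel (margY W) :=
  ⟨fun x y => sum_nonneg fun z _ => hW.1 x y z, hW.2⟩

lemma isChannel_margZ (hW : IsBC W) : IsChannel (margZ W) :=
  ⟨fun x z => sum_nonneg fun y _ => hW.1 x y z, fun x => sum_comm.trans (hW.2 x)⟩

variable [Fintype X]

lemma inv_card_mul_sum_eq_expect {k : ℕ} (f : Fin k → ℝ) : (k : ℝ)⁻¹ * ∑ m, f m = 𝔼 m, f m := by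
  rw [Fintype.expect_eq_sum_div_card, Fintype.card_fin, inv_mul_eq_div]

namespace IsBCIDCode

variable {n kY kZ : ℕ} {Q : Fin kY → Fin kZ → (Fin n → X) → ℝ} {DY : Fin kY → Finset (Fin n → Y)}
  {DZ : Fin kZ → Finset (Fin n → Z)} {l1Y l2Y l1Z l2Z : ℝ}

lemma isIDCode_margY [NeZero kZ] (hcode : IsBCIDCode n kY kZ W Q DY DZ l1Y l2Y l1Z l2Z) :
    IsIDCode n (margY W) (fun my x => 𝔼 mz, Q my mz x) DY l1Y l2Y := by
  refine ⟨fun my => IsPMF.expect (hcode.1 my), ?_⟩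
  simpa only [inv_card_mul_sum_eq_expect] using hcode.2.1

lemma isIDCode_margZ [NeZero kY] (hcode : IsBCIDCode n kY kZ W Q DY DZ l1Y l2Y l1Z l2Z) :
    IsIDCode n (margZ W) (fun mz x => 𝔼 my, Q my mz x) DZ l1Z l2Z := by
  refine ⟨fun mz => IsPMF.expect fun my => hcode.1 my mz, ?_⟩
  simpa only [inv_card_mul_sum_eq_expect] using hcode.2.2

end IsBCIDCode

theorem bc_id_strong_converse_general (hW : IsBC W) (RY RZ : ℝ) {l1Y l2Y l1Z l2Z : ℝ}
    (hsum : l1Y + l2Y + l1Z + l2Z < 1) {ε : ℝ} (hε : 0 < ε) :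
    ∃ η₀ : ℕ, ∀ n : ℕ, η₀ ≤ n →
      ∀ kY kZ : ℕ,
        Real.exp (Real.exp (n * RY)) ≤ kY →
        Real.exp (Real.exp (n * RZ)) ≤ kZ →
        ∀ (Q : Fin kY → Fin kZ → (Fin n → X) → ℝ)
          (DY : Fin kY → Finset (Fin n → Y)) (DZ : Fin kZ → Finset (Fin n → Z)),
          IsBCIDCode n kY kZ W Q DY DZ l1Y l2Y l1Z l2Z →
          ∃ P : X → ℝ, IsPMF P ∧
            RY < mutInf P (margY W) + ε ∧ RZ < mutInf P (margZ W) + ε := by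
  obtain ⟨δ, hδ, hδsum⟩ : ∃ δ > 0, l1Y + l2Y + l1Z + l2Z + 2 * δ < 1 :=
    ⟨(1 - (l1Y + l2Y + l1Z + l2Z)) / 3, by linarith, by linarith⟩
  refine eventually_atTop.1 ?_
  filter_upwards [eventually_ne_atTop 0,
    eventually_sub_le_sum_expect_of_isIDCode (isChannel_margY hW) RY hε hδ,
    eventually_sub_le_sum_expect_of_isIDCode (isChannel_margZ hW) RZ hε hδ]
    with n hn hY hZ kY kZ hkY hkZ Q DY DZ hcode
  have : NeZero n := ⟨hn⟩
  have : NeZero kY := ⟨by rintro rfl; simpa using (Real.exp_pos _).trans_le hkY⟩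
  have : NeZero kZ := ⟨by rintro rfl; simpa using (Real.exp_pos _).trans_le hkZ⟩
  have hmassY := hY (Fin kY) (by simpa using hkY) _ _ _ _ hcode.isIDCode_margY
  have hmassZ := hZ (Fin kZ) (by simpa using hkZ) _ _ _ _ hcode.isIDCode_margZ
  simp_rw [expect_comm (s := (univ : Finset (Fin kZ)))] at hmassZ
  have hq : IsPMF fun x => 𝔼 my, 𝔼 mz, Q my mz x :=
    IsPMF.expect fun my => IsPMF.expect (hcode.1 my)
  obtain ⟨x, hxY, hxZ⟩ := hq.exists_mem_inter_of_one_lt <|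
    (add_le_add hmassY hmassZ).trans_lt' (by linarith)
  exact ⟨empType x, isPMF_empType x, (mem_filter.1 hxY).2, (mem_filter.1 hxZ).2⟩

end BroadcastChannel

/-- **Claim 3.** Strong converse part of Theorem 3. -/
theorem bc_id_strong_converse
    {X Y Z : Type} [Fintype X] [Fintype Y] [Fintype Z]
    [Nonempty X] [Nonempty Y] [Nonempty Z]
    (W : X → Y → Z → ℝ) (hW : IsBC W)
    (RY RZ : ℝ) (hRY : 0 ≤ RY) (hRZ : 0 ≤ RZ)
    (l1Y l2Y l1Z l2Z : ℝ)
    (h1Y : 0 < l1Y) (h2Y : 0 < l2Y) (h1Z : 0 < l1Z) (h2Z : 0 < l2Z)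
    (hsum : l1Y + l2Y + l1Z + l2Z < 1)
    (ε : ℝ) (hε : 0 < ε) :
    ∃ η₀ : ℕ, ∀ n : ℕ, η₀ ≤ n →
      ∀ kY kZ : ℕ,
        kY = Nat.ceil (Real.exp (Real.exp (n * RY))) →
        kZ = Nat.ceil (Real.exp (Real.exp (n * RZ))) →
        ∀ (Q : Fin kY → Fin kZ → (Fin n → X) → ℝ)
          (DY : Fin kY → Finset (Fin n → Y)) (DZ : Fin kZ → Finset (Fin n → Z)),
          IsBCIDCode n kY kZ W Q DY DZ l1Y l2Y l1Z l2Z →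
          ∃ P : X → ℝ, IsPMF P ∧
            RY < mutInf P (margY W) + ε ∧ RZ < mutInf P (margZ W) + ε := by
  obtain ⟨η₀, h⟩ := bc_id_strong_converse_general hW RY RZ hsum hε
  exact ⟨η₀, fun n hn kY kZ hkY hkZ => h n hn kY kZ (hkY ▸ Nat.le_ceil _) (hkZ ▸ Nat.le_ceil _)⟩
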